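/- arXiv:1004.3299 — 3 statements merged into one kernel-verified Lean document; each statement's English description precedes it below -/
import Mathlib

section
/- Let η := limsup_{x→∞} g(x)/x. Then limsup_{x→∞} h(x)/x = η, and the right derivative h'₊ of h (which exists everywhere on (0,∞) and is nonincreasing, since h is concave) satisfies lim_{x→∞} h'₊(x) = η. -/
open Set Filter

/-!
The quotient `h x / x` of the envelope `h` is nonincreasing and dominates `g x / x`, so it stays
above `η = limsup g x / x`. Conversely, for every `b > η` the linear growth of `g` gives an affine
majorant `C + b * x` of `g`; minimality puts `h` below it, so `h x / x` is eventually below any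
number larger than `b`. Hence `h x / x → η`. The slopes of `h` from a fixed point then also tend to
`η`, and concavity squeezes the right derivative at `x` between `η`, the limit of the slopes from
`x` to infinity, and the slope from `0` to `x`.
-/

open Topology

section ConcaveFunctions

theorem concaveOn_sInf_image {E : Type*} [AddCommGroup E] [Module ℝ E] {s : Set E}
    {F : Set (E → ℝ)} (hne : F.Nonempty)
    (hbdd : ∀ x ∈ s, BddBelow ((fun f : E → ℝ => f x) '' F)) (hF : ∀ f ∈ F, ConcaveOn ℝ s f) :
    ConcaveOn ℝ s fun x => sInf ((fun f : E → ℝ => f x) '' F) := by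
  obtain ⟨f₀, hf₀⟩ := hne
  refine ⟨(hF f₀ hf₀).1, fun x hx y hy a b ha hb hab => ?_⟩
  refine le_csInf ⟨_, f₀, hf₀, rfl⟩ ?_
  rintro _ ⟨f, hf, rfl⟩
  calc _ ≤ a • f x + b • f y := by
        gcongr
        · exact csInf_le (hbdd x hx) ⟨f, hf, rfl⟩
        · exact csInf_le (hbdd y hy) ⟨f, hf, rfl⟩
    _ ≤ f (a • x + b • y) := (hF f hf).2 hx hy ha hb hab

variable {S : Set ℝ} {f : ℝ → ℝ} {x z : ℝ}

theorem hasDerivWithinAt_rightDeriv_of_concaveOn (hf : ConcaveOn ℝ S f) (hx : x ∈ interior S) :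
    HasDerivWithinAt f (derivWithin f (Ioi x) x) (Ioi x) x := by
  simpa using (hf.neg.differentiableWithinAt_Ioi_of_mem_interior hx).neg.hasDerivWithinAt

theorem antitoneOn_rightDeriv_of_concaveOn (hf : ConcaveOn ℝ S f) :
    AntitoneOn (fun x => derivWithin f (Ioi x) x) (interior S) := by
  simpa [derivWithin.neg] using hf.neg.monotoneOn_rightDeriv.neg

theorem rightDeriv_le_slope_of_concaveOn (hf : ConcaveOn ℝ S f) (hz : z ∈ S)
    (hx : x ∈ interior S) (hzx : z < x) : derivWithin f (Ioi x) x ≤ slope f z x := by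
  have h := (hf.neg.slope_le_leftDeriv_of_mem_interior hz hx hzx).trans
    (hf.neg.leftDeriv_le_rightDeriv_of_mem_interior hx)
  simpa only [derivWithin.neg, slope_neg_fun, Pi.neg_apply, neg_le_neg_iff] using h

theorem antitoneOn_div_of_concaveOn (hf : ConcaveOn ℝ (Ici 0) f) (hf0 : 0 ≤ f 0) :
    AntitoneOn (fun x => f x / x) (Ioi 0) := by
  intro x hx y hy hxy
  rw [mem_Ioi] at hx hy
  have slope_le : (f y - f 0) / y ≤ (f x - f 0) / x := by
    simpa [slope_def_field] using
      hf.antitoneOn_slope_gt self_mem_Ici ⟨hx.le, hx⟩ ⟨hy.le, hy⟩ hxy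
  calc f y / y = (f y - f 0) / y + f 0 / y := by ring
    _ ≤ (f x - f 0) / x + f 0 / x := by gcongr
    _ = f x / x := by ring

end ConcaveFunctions

section LinearGrowth

variable {f g : ℝ → ℝ} {M a b η : ℝ}

theorem tendsto_slope_of_tendsto_div (hf : Tendsto (fun x => f x / x) atTop (𝓝 η)) (z : ℝ) :
    Tendsto (slope f z) atTop (𝓝 η) := by
  have tendsto_div_zero (c : ℝ) : Tendsto (fun x : ℝ => c / x) atTop (𝓝 0) :=
    tendsto_const_nhds.div_atTop tendsto_id
  have hlim : Tendsto (fun x => (f x / x - f z / x) / (1 - z / x)) atTop (𝓝 η) := by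
    simpa [Pi.div_def] using (hf.sub (tendsto_div_zero (f z))).div
      ((tendsto_div_zero z).const_sub 1) (by norm_num)
  refine hlim.congr' ?_
  filter_upwards [eventually_gt_atTop 0] with x hx
  rw [slope_def_field, ← sub_div, one_sub_div hx.ne', div_div_div_cancel_right₀ hx.ne']

theorem tendsto_rightDeriv_of_concaveOn (hf : ConcaveOn ℝ (Ici a) f)
    (hlim : Tendsto (fun x => f x / x) atTop (𝓝 η)) :
    Tendsto (fun x => derivWithin f (Ioi x) x) atTop (𝓝 η) := by
  have mem_interior {x : ℝ} (hx : a < x) : x ∈ interior (Ici a) := by rwa [interior_Ici]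
  have le_rightDeriv : ∀ᶠ x in atTop, η ≤ derivWithin f (Ioi x) x := by
    filter_upwards [eventually_gt_atTop a] with x hx
    refine le_of_tendsto (tendsto_slope_of_tendsto_div hlim x) ?_
    filter_upwards [eventually_gt_atTop x] with y hxy
    exact hf.slope_le_of_hasDerivWithinAt_Ioi hx.le (hx.trans hxy).le hxy
      (hasDerivWithinAt_rightDeriv_of_concaveOn hf (mem_interior hx))
  have rightDeriv_le : ∀ᶠ x in atTop, derivWithin f (Ioi x) x ≤ slope f a x := by
    filter_upwards [eventually_gt_atTop a] with x hx
    exact rightDeriv_le_slope_of_concaveOn hf self_mem_Ici (mem_interior hx) hx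
  exact tendsto_of_tendsto_of_tendsto_of_le_of_le' tendsto_const_nhds
    (tendsto_slope_of_tendsto_div hlim a) le_rightDeriv rightDeriv_le

theorem eventually_div_lt_of_le_affine {C : ℝ} (hf : ∀ x ∈ Ici (0 : ℝ), f x ≤ C + b * x)
    (hba : b < a) : ∀ᶠ x in atTop, f x / x < a := by
  have hlim : Tendsto (fun x : ℝ => C / x + b) atTop (𝓝 b) := by
    simpa using (tendsto_const_nhds.div_atTop tendsto_id).add_const b
  filter_upwards [hlim.eventually_lt_const hba, eventually_gt_atTop 0] with x hxa hx
  calc f x / x ≤ (C + b * x) / x := by gcongr; exact hf x hx.le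
    _ = C / x + b := by field_simp
    _ < a := hxa

theorem isBoundedUnder_div_of_le_affine {C : ℝ} (hf : ∀ x ∈ Ici (0 : ℝ), f x ≤ C + b * x) :
    IsBoundedUnder (· ≤ ·) atTop fun x => f x / x :=
  isBoundedUnder_of_eventually_le
    ((eventually_div_lt_of_le_affine hf (lt_add_one b)).mono fun _ => le_of_lt)

theorem exists_le_affine_of_limsup_div_lt (hg : ∀ x ∈ Ici (0 : ℝ), g x ≤ M * (1 + x))
    (hb : limsup (fun x => g x / x) atTop < b) :
    ∃ C, ∀ x ∈ Ici (0 : ℝ), g x ≤ C + b * x := by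
  have hbdd : IsBoundedUnder (· ≤ ·) atTop fun x => g x / x :=
    isBoundedUnder_div_of_le_affine (C := M) (b := M) fun x hx => (hg x hx).trans_eq (by ring)
  obtain ⟨N, hN⟩ := eventually_atTop.1
    ((eventually_lt_of_limsup_lt hb hbdd).and (eventually_gt_atTop 0))
  have hN0 : 0 < N := (hN N le_rfl).2
  refine ⟨|M| + |M - b| * N, fun x (hx : 0 ≤ x) => ?_⟩
  rcases le_total x N with hxN | hNx
  · calc g x ≤ M + (M - b) * x + b * x := (hg x hx).trans_eq (by ring)
      _ ≤ |M| + |M - b| * N + b * x := by gcongr <;> exact le_abs_self _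
  · calc g x ≤ b * x := ((div_lt_iff₀ (hN x hNx).2).1 (hN x hNx).1).le
      _ ≤ |M| + |M - b| * N + b * x := le_add_of_nonneg_left (by positivity)

theorem eventually_div_nonneg (hg : ∀ x ∈ Ici (0 : ℝ), 0 ≤ g x) :
    ∀ᶠ x in atTop, 0 ≤ g x / x := by
  filter_upwards [eventually_ge_atTop 0] with x hx
  exact div_nonneg (hg x hx) hx

end LinearGrowth

/-- The concave, nonnegative, nondecreasing majorants of `g` on `[0, ∞)`, encoded as total
functions on `ℝ` whose values on the negative axis are unconstrained. -/
def concaveMajorants (g : ℝ → ℝ) : Set (ℝ → ℝ) :=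
  {f | ConcaveOn ℝ (Ici 0) f ∧ MonotoneOn f (Ici 0) ∧
    (∀ x ∈ Ici (0 : ℝ), 0 ≤ f x) ∧ (∀ x ∈ Ici (0 : ℝ), g x ≤ f x)}

/-- The smallest concave, nonnegative, nondecreasing majorant of `g` on `[0, ∞)`, as a pointwise
infimum. Its values are meaningful only on `[0, ∞)` and when `g` has a majorant of this kind. -/
noncomputable def concaveEnvelope (g : ℝ → ℝ) (x : ℝ) : ℝ :=
  sInf ((fun f : ℝ → ℝ => f x) '' concaveMajorants g)

section ConcaveEnvelope

variable {f g : ℝ → ℝ} {M C b x : ℝ}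

theorem affine_mem_concaveMajorants (hC : 0 ≤ C) (hb : 0 ≤ b)
    (hle : ∀ x ∈ Ici (0 : ℝ), g x ≤ C + b * x) : (fun x => C + b * x) ∈ concaveMajorants g := by
  refine ⟨?_, ?_, fun x (hx : 0 ≤ x) => by positivity, hle⟩
  · exact (concaveOn_const C (convex_Ici 0)).add ((concaveOn_id (convex_Ici 0)).smul hb)
  · intro x _ y _ hxy
    dsimp only
    gcongr

theorem concaveMajorants_nonempty (hg_nonneg : ∀ x ∈ Ici (0 : ℝ), 0 ≤ g x)
    (hg_growth : ∀ x ∈ Ici (0 : ℝ), g x ≤ M * (1 + x)) : (concaveMajorants g).Nonempty := by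
  have hM : 0 ≤ M := (hg_nonneg 0 self_mem_Ici).trans (by simpa using hg_growth 0 self_mem_Ici)
  exact ⟨_, affine_mem_concaveMajorants hM hM fun x hx => (hg_growth x hx).trans_eq (by ring)⟩

theorem bddBelow_image_concaveMajorants (g : ℝ → ℝ) (hx : 0 ≤ x) :
    BddBelow ((fun f : ℝ → ℝ => f x) '' concaveMajorants g) :=
  ⟨0, forall_mem_image.2 fun _ hf => hf.2.2.1 x hx⟩

theorem concaveEnvelope_le (hf : f ∈ concaveMajorants g) (hx : 0 ≤ x) :
    concaveEnvelope g x ≤ f x :=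
  csInf_le (bddBelow_image_concaveMajorants g hx) (mem_image_of_mem _ hf)

theorem le_concaveEnvelope (hne : (concaveMajorants g).Nonempty) (hx : 0 ≤ x) :
    g x ≤ concaveEnvelope g x :=
  le_csInf (hne.image _) (forall_mem_image.2 fun _ hf => hf.2.2.2 x hx)

theorem concaveOn_concaveEnvelope (hne : (concaveMajorants g).Nonempty) :
    ConcaveOn ℝ (Ici 0) (concaveEnvelope g) :=
  concaveOn_sInf_image hne (fun _ hx => bddBelow_image_concaveMajorants g hx) fun _ hf => hf.1

theorem limsup_div_le_concaveEnvelope_div (hne : (concaveMajorants g).Nonempty)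
    (hg : ∀ x ∈ Ici (0 : ℝ), 0 ≤ g x) (hx : 0 < x) :
    limsup (fun y => g y / y) atTop ≤ concaveEnvelope g x / x := by
  have hanti : AntitoneOn (fun y => concaveEnvelope g y / y) (Ioi 0) :=
    antitoneOn_div_of_concaveOn (concaveOn_concaveEnvelope hne)
      ((hg 0 self_mem_Ici).trans (le_concaveEnvelope hne le_rfl))
  refine limsup_le_of_le
    (isBoundedUnder_of_eventually_ge (eventually_div_nonneg hg)).isCoboundedUnder_le ?_
  filter_upwards [eventually_ge_atTop x] with y hxy
  have hy : 0 < y := hx.trans_le hxy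
  calc g y / y ≤ concaveEnvelope g y / y := by gcongr; exact le_concaveEnvelope hne hy.le
    _ ≤ concaveEnvelope g x / x := hanti hx hy hxy

theorem eventually_concaveEnvelope_div_lt (hg_nonneg : ∀ x ∈ Ici (0 : ℝ), 0 ≤ g x)
    (hg_growth : ∀ x ∈ Ici (0 : ℝ), g x ≤ M * (1 + x)) {a : ℝ}
    (ha : limsup (fun x => g x / x) atTop < a) : ∀ᶠ x in atTop, concaveEnvelope g x / x < a := by
  obtain ⟨b, hηb, hba⟩ := exists_between ha
  obtain ⟨C, hC⟩ := exists_le_affine_of_limsup_div_lt hg_growth hηb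
  have hC0 : 0 ≤ C := (hg_nonneg 0 self_mem_Ici).trans (by simpa using hC 0 self_mem_Ici)
  have hη0 : 0 ≤ limsup (fun x => g x / x) atTop :=
    le_limsup_of_frequently_le (eventually_div_nonneg hg_nonneg).frequently
      (isBoundedUnder_div_of_le_affine hC)
  have hmem := affine_mem_concaveMajorants hC0 (hη0.trans hηb.le) hC
  exact eventually_div_lt_of_le_affine (fun _ hx => concaveEnvelope_le hmem hx) hba

theorem tendsto_concaveEnvelope_div (hg_nonneg : ∀ x ∈ Ici (0 : ℝ), 0 ≤ g x)
    (hg_growth : ∀ x ∈ Ici (0 : ℝ), g x ≤ M * (1 + x)) :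
    Tendsto (fun x => concaveEnvelope g x / x) atTop (𝓝 (limsup (fun x => g x / x) atTop)) := by
  have hne := concaveMajorants_nonempty hg_nonneg hg_growth
  refine tendsto_order.2
    ⟨fun a ha => ?_, fun a ha => eventually_concaveEnvelope_div_lt hg_nonneg hg_growth ha⟩
  filter_upwards [eventually_gt_atTop 0] with x hx
  exact ha.trans_le (limsup_div_le_concaveEnvelope_div hne hg_nonneg hx)

end ConcaveEnvelope

theorem limsup_smallest_concave_majorant_general
    (g : ℝ → ℝ) (M : ℝ)
    (hg_nonneg : ∀ x ∈ Ici (0 : ℝ), 0 ≤ g x)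
    (hg_growth : ∀ x ∈ Ici (0 : ℝ), g x ≤ M * (1 + x)) :
    limsup (fun x => concaveEnvelope g x / x) atTop = limsup (fun x => g x / x) atTop ∧
    ∃ d : ℝ → ℝ,
      (∀ x ∈ Ioi (0 : ℝ), HasDerivWithinAt (concaveEnvelope g) (d x) (Ioi x) x) ∧
      AntitoneOn d (Ioi 0) ∧
      Tendsto d atTop (𝓝 (limsup (fun x => g x / x) atTop)) := by
  have hconc : ConcaveOn ℝ (Ici 0) (concaveEnvelope g) :=
    concaveOn_concaveEnvelope (concaveMajorants_nonempty hg_nonneg hg_growth)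
  have hlim := tendsto_concaveEnvelope_div hg_nonneg hg_growth
  rw [← interior_Ici (a := (0 : ℝ))]
  exact ⟨hlim.limsup_eq, fun x => derivWithin (concaveEnvelope g) (Ioi x) x,
    fun x hx => hasDerivWithinAt_rightDeriv_of_concaveOn hconc hx,
    antitoneOn_rightDeriv_of_concaveOn hconc, tendsto_rightDeriv_of_concaveOn hconc hlim⟩

/-- With `h` the smallest concave, nonnegative, nondecreasing majorant of `g` and
`η := limsup_{x→∞} g(x)/x`, we have `limsup_{x→∞} h(x)/x = η`, and the right derivative of `h`
(which exists everywhere on `(0,∞)` and is nonincreasing) tends to `η` at infinity. -/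
theorem limsup_smallest_concave_majorant
    (g : ℝ → ℝ) (M : ℝ) (hM : 0 < M)
    (hg_cont : ContinuousOn g (Ici 0))
    (hg_nonneg : ∀ x ∈ Ici (0 : ℝ), 0 ≤ g x)
    (hg_growth : ∀ x ∈ Ici (0 : ℝ), g x ≤ M * (1 + x))
    (F : Set (ℝ → ℝ))
    (hF : F = {f | ConcaveOn ℝ (Ici 0) f ∧ MonotoneOn f (Ici 0) ∧
      (∀ x ∈ Ici (0 : ℝ), 0 ≤ f x) ∧ (∀ x ∈ Ici (0 : ℝ), g x ≤ f x)})
    (h : ℝ → ℝ)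
    (hh : ∀ x, h x = sInf ((fun f : ℝ → ℝ => f x) '' F))
    (η : ℝ)
    (hη : η = Filter.limsup (fun x => g x / x) Filter.atTop) :
    Filter.limsup (fun x => h x / x) Filter.atTop = η ∧
    ∃ d : ℝ → ℝ,
      (∀ x ∈ Ioi (0 : ℝ), HasDerivWithinAt h (d x) (Ioi x) x) ∧
      AntitoneOn d (Ioi 0) ∧
      Tendsto d atTop (nhds η) := by
  obtain rfl : h = concaveEnvelope g := funext fun x => by rw [hh, hF]; rfl
  exact hη ▸ limsup_smallest_concave_majorant_general g M hg_nonneg hg_growth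
end

section
/- Let η := limsup_{x→∞} g(x)/x. Then the function f : [0,∞) → ℝ defined by f(x) := h(x) − η x is nondecreasing and concave on [0,∞). -/
open Set Filter

/-!
For `x < y`, concavity keeps `h` below the chord through `x` and `y` at every point to the right
of `y`. Dividing by `z` and letting `z → ∞`, every concave `h ≥ g` satisfies
`limsup g(z)/z ≤ (h y - h x) / (y - x)`, which says that `h - η x` is nondecreasing.
-/

open scoped Topology

section ConcaveMajorant

theorem concaveOn_iInf {𝕜 E β ι : Type*} [Semiring 𝕜] [PartialOrder 𝕜] [AddCommMonoid E]
    [SMul 𝕜 E] [AddCommMonoid β] [ConditionallyCompleteLattice β] [IsOrderedAddMonoid β]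
    [SMul 𝕜 β] [PosSMulMono 𝕜 β] [Nonempty ι] {s : Set E} {f : ι → E → β}
    (hf : ∀ i, ConcaveOn 𝕜 s (f i)) (hbdd : ∀ x ∈ s, BddBelow (range fun i ↦ f i x)) :
    ConcaveOn 𝕜 s fun x ↦ ⨅ i, f i x := by
  refine ⟨(hf (Classical.arbitrary ι)).1, fun x hx y hy a b ha hb hab ↦ le_ciInf fun i ↦ ?_⟩
  calc a • (⨅ j, f j x) + b • (⨅ j, f j y)
      ≤ a • f i x + b • f i y :=
        add_le_add (smul_le_smul_of_nonneg_left (ciInf_le (hbdd x hx) i) ha)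
          (smul_le_smul_of_nonneg_left (ciInf_le (hbdd y hy) i) hb)
    _ ≤ f i (a • x + b • y) := (hf i).2 hx hy ha hb hab

variable {s : Set ℝ} {g h : ℝ → ℝ} {x y : ℝ}

theorem concaveOn_sub_mul_left (hh : ConcaveOn ℝ s h) (c : ℝ) :
    ConcaveOn ℝ s fun x ↦ h x - c * x :=
  hh.sub ((LinearMap.mulLeft ℝ c).convexOn hh.1)

theorem tendsto_add_mul_div_atTop (b m : ℝ) :
    Tendsto (fun z : ℝ ↦ (b + m * z) / z) atTop (𝓝 m) := by
  have hlim : Tendsto (fun z : ℝ ↦ b / z + m) atTop (𝓝 m) := by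
    simpa only [id, zero_add] using (tendsto_const_nhds.div_atTop tendsto_id).add_const m
  refine hlim.congr' ?_
  filter_upwards [eventually_ne_atTop 0] with z hz
  rw [add_div, mul_div_cancel_right₀ m hz]

theorem limsup_div_le_slope_of_concaveOn (hs : s ∈ atTop) (hh : ConcaveOn ℝ s h)
    (hgh : g ≤ᶠ[atTop] h) (hg : IsCoboundedUnder (· ≤ ·) atTop fun z ↦ g z / z)
    (hx : x ∈ s) (hxy : x < y) :
    limsup (fun z ↦ g z / z) atTop ≤ (h y - h x) / (y - x) := by
  set m := (h y - h x) / (y - x)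
  have hlim := tendsto_add_mul_div_atTop (h y - m * y) m
  refine (limsup_le_limsup ?_ hg hlim.isBoundedUnder_le).trans_eq hlim.limsup_eq
  filter_upwards [hs, hgh, eventually_gt_atTop y, eventually_gt_atTop 0] with z hzs hgz hyz hz
  have hchord : h z ≤ h y - m * y + m * z := by
    have hslope : (h z - h y) / (z - y) ≤ m := hh.slope_anti_adjacent hx hzs hxy hyz
    rw [div_le_iff₀ (sub_pos.mpr hyz)] at hslope
    linarith
  gcongr
  exact hgz.trans hchord

theorem majorant_sub_linear_monotone_concave_general (hs : s ∈ atTop) (hh : ConcaveOn ℝ s h)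
    (hgh : g ≤ᶠ[atTop] h) (hg : IsCoboundedUnder (· ≤ ·) atTop fun x ↦ g x / x) :
    MonotoneOn (fun x ↦ h x - limsup (fun z ↦ g z / z) atTop * x) s ∧
      ConcaveOn ℝ s fun x ↦ h x - limsup (fun z ↦ g z / z) atTop * x := by
  refine ⟨fun x hx y _ hxy ↦ ?_, concaveOn_sub_mul_left hh _⟩
  rcases hxy.eq_or_lt with rfl | hlt
  · exact le_rfl
  have hslope := limsup_div_le_slope_of_concaveOn hs hh hgh hg hx hlt
  rw [le_div_iff₀ (sub_pos.mpr hlt)] at hslope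
  linarith

end ConcaveMajorant

theorem isCoboundedUnder_le_div_atTop {g : ℝ → ℝ} (hg : ∀ᶠ x in atTop, 0 ≤ g x) :
    IsCoboundedUnder (· ≤ ·) atTop fun x ↦ g x / x := by
  refine isCoboundedUnder_le_of_eventually_le atTop (x := 0) ?_
  filter_upwards [hg, eventually_ge_atTop 0] with x hgx hx
  exact div_nonneg hgx hx

/-- The concave, nonnegative, nondecreasing functions on `[0, ∞)` that dominate `g` there, as
functions on all of `ℝ` whose values on the negative half-line are arbitrary. -/
def monotoneConcaveMajorants (g : ℝ → ℝ) : Set (ℝ → ℝ) :=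
  {f | ConcaveOn ℝ (Ici 0) f ∧ MonotoneOn f (Ici 0) ∧
    (∀ x ∈ Ici (0 : ℝ), 0 ≤ f x) ∧ (∀ x ∈ Ici (0 : ℝ), g x ≤ f x)}

/-- The smallest concave, nonnegative, nondecreasing majorant of `g` on `[0, ∞)`, as a pointwise
infimum. It is the constant `0`, the junk value of `⨅`, if `g` has no such majorant. -/
noncomputable def leastMonotoneConcaveMajorant (g : ℝ → ℝ) (x : ℝ) : ℝ :=
  ⨅ f : monotoneConcaveMajorants g, f.1 x

section LeastMajorant

variable {g : ℝ → ℝ}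

theorem mul_one_add_mem_monotoneConcaveMajorants {M : ℝ} (hM : 0 ≤ M)
    (hg : ∀ x ∈ Ici (0 : ℝ), g x ≤ M * (1 + x)) :
    (fun x ↦ M * (1 + x)) ∈ monotoneConcaveMajorants g := by
  have hconv : Convex ℝ (Ici (0 : ℝ)) := convex_Ici 0
  refine ⟨((concaveOn_const 1 hconv).add (concaveOn_id hconv)).smul hM, ?_, ?_, hg⟩
  · intro x _ y _ hxy
    dsimp only
    gcongr
  · intro x hx
    exact mul_nonneg hM (add_nonneg zero_le_one hx)

theorem concaveOn_leastMonotoneConcaveMajorant (hne : (monotoneConcaveMajorants g).Nonempty) :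
    ConcaveOn ℝ (Ici 0) (leastMonotoneConcaveMajorant g) := by
  have := hne.to_subtype
  refine concaveOn_iInf (fun f ↦ f.2.1) fun x hx ↦ ⟨0, ?_⟩
  rintro _ ⟨f, rfl⟩
  exact f.2.2.2.1 x hx

theorem le_leastMonotoneConcaveMajorant (hne : (monotoneConcaveMajorants g).Nonempty) {x : ℝ}
    (hx : x ∈ Ici 0) : g x ≤ leastMonotoneConcaveMajorant g x := by
  have := hne.to_subtype
  exact le_ciInf fun f ↦ f.2.2.2.2 x hx

end LeastMajorant

/-- With `h` the smallest concave, nonnegative, nondecreasing majorant of `g` and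
`η := limsup_{x→∞} g(x)/x`, the function `x ↦ h(x) − η x` is nondecreasing and concave
on `[0,∞)`. -/
theorem majorant_sub_linear_monotone_concave
    (g : ℝ → ℝ) (M : ℝ) (hM : 0 < M)
    (hg_cont : ContinuousOn g (Ici 0))
    (hg_nonneg : ∀ x ∈ Ici (0 : ℝ), 0 ≤ g x)
    (hg_growth : ∀ x ∈ Ici (0 : ℝ), g x ≤ M * (1 + x))
    (F : Set (ℝ → ℝ))
    (hF : F = {f | ConcaveOn ℝ (Ici 0) f ∧ MonotoneOn f (Ici 0) ∧
      (∀ x ∈ Ici (0 : ℝ), 0 ≤ f x) ∧ (∀ x ∈ Ici (0 : ℝ), g x ≤ f x)})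
    (h : ℝ → ℝ)
    (hh : ∀ x, h x = sInf ((fun f : ℝ → ℝ => f x) '' F))
    (η : ℝ)
    (hη : η = Filter.limsup (fun x => g x / x) Filter.atTop) :
    MonotoneOn (fun x => h x - η * x) (Ici 0) ∧
    ConcaveOn ℝ (Ici 0) (fun x => h x - η * x) := by
  have h_eq : h = leastMonotoneConcaveMajorant g := by
    funext x
    rw [hh, hF, sInf_image']
    rfl
  have hne : (monotoneConcaveMajorants g).Nonempty :=
    ⟨_, mul_one_add_mem_monotoneConcaveMajorants hM.le hg_growth⟩
  have hIci : Ici (0 : ℝ) ∈ atTop := Ici_mem_atTop 0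
  subst h_eq hη
  exact majorant_sub_linear_monotone_concave_general hIci
    (concaveOn_leastMonotoneConcaveMajorant hne)
    (mem_of_superset hIci fun _ ↦ le_leastMonotoneConcaveMajorant hne)
    (isCoboundedUnder_le_div_atTop (mem_of_superset hIci hg_nonneg))
end

section
/- Suppose g : [0,∞) → [0,∞) is continuous with g ≤ h on [0,∞), where h is concave, nonnegative and nondecreasing. Then there exists a family (g^ε)_{ε∈(0,1)} of functions g^ε : [0,∞) → [0,∞) such that, for each ε ∈ (0,1): (i) g^ε is bounded; (ii) g^ε is continuous on [0,∞) and infinitely differentiable on (0,∞); (iii) the first and second derivatives of g^ε have compact support contained in (0,∞); (iv) g^ε(x) ≤ h(x) for all x ≥ 0; and moreover (v) lim_{ε↓0} g^ε(x) = g(x) for every x ≥ 0. -/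
/-!
The functions `g^ε` can be chosen below `g` itself. Extend `g` evenly to `ℝ` and multiply it by a
compactly supported cutoff that equals `1` on `[0, 1/ε]`; call the result `f`. The intervals
`[max 0 (f x - ε), f x]` are convex, and near each `x` they all contain the constant
`max 0 (f x - ε / 2)`, so a smooth partition of unity gives a smooth selection `g^ε`. On a
neighborhood of `0` the intervals may first be shrunk to one such constant, which keeps the support
of the derivatives of `g^ε` away from `0`.
-/

open Set Filter

open scoped Topology ContDiff Manifold

theorem eventually_max_zero_sub_half_mem_Icc {X : Type*} [TopologicalSpace X] {f : X → ℝ} {x : X}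
    (hf : ContinuousAt f x) (hf_nonneg : ∀ y, 0 ≤ f y) {ε : ℝ} (hε : 0 < ε) :
    ∀ᶠ y in 𝓝 x, max 0 (f x - ε / 2) ∈ Icc (max 0 (f y - ε)) (f y) := by
  filter_upwards [hf.eventually_const_lt (sub_lt_self (f x) (half_pos hε)),
    hf.eventually_lt_const (lt_add_of_pos_right (f x) (half_pos hε))] with y hlow hupp
  exact ⟨max_le_max_left 0 (by linarith), max_le (hf_nonneg y) hlow.le⟩

section FiniteDimensional

variable {E : Type*} [NormedAddCommGroup E] [NormedSpace ℝ E] [FiniteDimensional ℝ E]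
  {f : E → ℝ} {ε : ℝ}

theorem exists_contDiff_eventuallyConst_mem_Icc (hf : Continuous f) (hf_nonneg : ∀ x, 0 ≤ f x)
    (hε : 0 < ε) (x₀ : E) :
    ∃ F : E → ℝ, ContDiff ℝ ∞ F ∧ EventuallyConst F (𝓝 x₀) ∧
      ∀ x, F x ∈ Icc (max 0 (f x - ε)) (f x) := by
  have loc (x : E) := eventually_max_zero_sub_half_mem_Icc hf.continuousAt hf_nonneg hε (x := x)
  set c := max 0 (f x₀ - ε / 2)
  obtain ⟨V, hV, hV_closed, hVc⟩ := exists_mem_nhds_isClosed_subset (loc x₀).eventually_nhds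
  let t (x : E) : Set ℝ := Icc (max 0 (f x - ε)) (f x) ∩ {z | x ∈ V → z = c}
  have t_convex (x : E) : Convex ℝ (t x) := by
    refine (convex_Icc _ _).inter ?_
    by_cases hx : x ∈ V <;> simp [hx, convex_univ]
  have t_loc (x : E) : ∃ a : ℝ, ∀ᶠ y in 𝓝 x, a ∈ t y := by
    by_cases hx : x ∈ V
    · exact ⟨c, (hVc hx).mono fun y hy ↦ ⟨hy, fun _ ↦ rfl⟩⟩
    · refine ⟨max 0 (f x - ε / 2), ?_⟩
      filter_upwards [loc x, hV_closed.isOpen_compl.mem_nhds hx] with y hy hyV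
      exact ⟨hy, fun hy' ↦ absurd hy' hyV⟩
  obtain ⟨F, hF⟩ := exists_contMDiffMap_forall_mem_convex_of_local_const 𝓘(ℝ, E) (n := ⊤)
    t_convex t_loc
  refine ⟨F, F.contMDiff.contDiff, ?_, fun x ↦ (hF x).1⟩
  exact eventuallyConst_iff_exists_eventuallyEq.2
    ⟨c, mem_of_superset hV fun x hx ↦ (hF x).2 hx⟩

theorem exists_contDiff_hasCompactSupport_eventuallyConst_le (hf : Continuous f)
    (hf_nonneg : ∀ x, 0 ≤ f x) (hε : 0 < ε) (x₀ : E) {K : Set E} (hK : IsCompact K) :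
    ∃ F : E → ℝ, ContDiff ℝ ∞ F ∧ HasCompactSupport F ∧ EventuallyConst F (𝓝 x₀) ∧
      (∀ x, F x ∈ Icc 0 (f x)) ∧ ∀ x ∈ K, f x - ε ≤ F x := by
  obtain ⟨χ, hχ_one, -, hχ_supp, hχ_mem⟩ :=
    exists_continuous_one_zero_of_isCompact hK isClosed_empty (disjoint_empty K)
  obtain ⟨F, hF_smooth, hF_const, hF⟩ := exists_contDiff_eventuallyConst_mem_Icc
    (χ.continuous.mul hf) (fun x ↦ mul_nonneg (hχ_mem x).1 (hf_nonneg x)) hε x₀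
  have F_nonneg (x : E) : 0 ≤ F x := (le_max_left _ _).trans (hF x).1
  refine ⟨F, hF_smooth, hχ_supp.mono fun x hFx hχx ↦ hFx ?_, hF_const, fun x ↦ ⟨F_nonneg x, ?_⟩,
    fun x hx ↦ ?_⟩
  · exact ((hF x).2.trans_eq (by simp [hχx])).antisymm (F_nonneg x)
  · exact (hF x).2.trans (mul_le_of_le_one_left (hf_nonneg x) (hχ_mem x).2)
  · simpa [hχ_one hx] using (le_max_right _ _).trans (hF x).1

end FiniteDimensional

theorem exists_isCompact_subset_Ioi_deriv_eq_zero {F : Type*} [NormedAddCommGroup F]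
    [NormedSpace ℝ F] {f : ℝ → F} {a : ℝ} (hf : HasCompactSupport f)
    (hfa : EventuallyConst f (𝓝 a)) :
    ∃ K : Set ℝ, IsCompact K ∧ K ⊆ Ioi a ∧
      ∀ x ∈ Ioi a, x ∉ K → deriv f x = 0 ∧ deriv (deriv f) x = 0 := by
  obtain ⟨c, hc⟩ := eventuallyConst_iff_exists_eventuallyEq.1 hfa
  have ha : a ∉ tsupport (deriv f) := by
    rw [notMem_tsupport_iff_eventuallyEq]
    exact hc.deriv.trans (.of_eq (deriv_const' c))
  refine ⟨tsupport (deriv f) ∩ Ici a, hf.deriv.isCompact.inter_right isClosed_Ici, ?_, ?_⟩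
  · rintro x ⟨hx, hax⟩
    exact lt_of_le_of_ne hax (ne_of_mem_of_not_mem hx ha).symm
  · intro x hax hx
    have hx' : x ∉ tsupport (deriv f) := fun h ↦ hx ⟨h, mem_Ici_of_Ioi hax⟩
    exact ⟨image_eq_zero_of_notMem_tsupport hx',
      Function.notMem_support.1 fun h ↦ hx' (support_deriv_subset h)⟩

theorem tendstoLocallyUniformlyOn_Ici_zero_of_dist_le {α : Type*} [PseudoMetricSpace α]
    {G : ℝ → ℝ → α} {g : ℝ → α} (hG : ∀ ε > 0, ∀ x ∈ Icc 0 ε⁻¹, dist (g x) (G ε x) ≤ ε) :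
    TendstoLocallyUniformlyOn G g (𝓝[>] 0) (Ici 0) := by
  rw [Metric.tendstoLocallyUniformlyOn_iff]
  intro δ hδ x hx
  have radius_pos : 0 < x + 1 := add_pos_of_nonneg_of_pos hx one_pos
  refine ⟨Iic (x + 1) ∩ Ici 0, inter_mem (mem_nhdsWithin_of_mem_nhds (Iic_mem_nhds (lt_add_one x)))
    self_mem_nhdsWithin, ?_⟩
  filter_upwards [Ioo_mem_nhdsGT (lt_min hδ (inv_pos.2 radius_pos))] with ε ⟨hε, hεlt⟩ y ⟨hy, hy0⟩
  have y_le : y ≤ ε⁻¹ :=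
    hy.trans ((le_inv_comm₀ hε radius_pos).1 (hεlt.le.trans (min_le_right _ _)))
  exact (hG ε hε y ⟨hy0, y_le⟩).trans_lt (hεlt.trans_le (min_le_left _ _))

theorem approximation_of_payoff_general {g : ℝ → ℝ} (hg_cont : ContinuousOn g (Ici 0))
    (hg_nonneg : ∀ x ∈ Ici (0 : ℝ), 0 ≤ g x) :
    ∃ G : ℝ → ℝ → ℝ,
      (∀ ε > 0,
        (∃ C : ℝ, ∀ x, |G ε x| ≤ C) ∧
        ContDiff ℝ ∞ (G ε) ∧
        (∃ K : Set ℝ, IsCompact K ∧ K ⊆ Ioi 0 ∧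
          ∀ x ∈ Ioi (0 : ℝ), x ∉ K → deriv (G ε) x = 0 ∧ deriv (deriv (G ε)) x = 0) ∧
        ∀ x ∈ Ici (0 : ℝ), G ε x ∈ Icc 0 (g x)) ∧
      TendstoLocallyUniformlyOn G g (𝓝[>] 0) (Ici 0) := by
  have abs_cont : Continuous fun x : ℝ ↦ g |x| := hg_cont.comp_continuous continuous_abs abs_nonneg
  have approx (ε : ℝ) (hε : 0 < ε) := exists_contDiff_hasCompactSupport_eventuallyConst_le abs_cont
    (fun x ↦ hg_nonneg |x| (abs_nonneg x)) hε 0 (isCompact_Icc (a := 0) (b := ε⁻¹))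
  choose! G hG_smooth hG_supp hG_const hG_mem hG_close using approx
  have mem_Icc (ε : ℝ) (hε : 0 < ε) (x : ℝ) (hx : 0 ≤ x) : G ε x ∈ Icc 0 (g x) := by
    simpa only [abs_of_nonneg hx] using hG_mem ε hε x
  refine ⟨G, fun ε hε ↦ ⟨?_, hG_smooth ε hε,
    exists_isCompact_subset_Ioi_deriv_eq_zero (hG_supp ε hε) (hG_const ε hε), mem_Icc ε hε⟩,
    tendstoLocallyUniformlyOn_Ici_zero_of_dist_le fun ε hε x hx ↦ ?_⟩
  · exact (hG_supp ε hε).exists_bound_of_continuous (hG_smooth ε hε).continuous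
  · have hclose := hG_close ε hε x hx
    rw [abs_of_nonneg hx.1] at hclose
    rw [Real.dist_eq, abs_of_nonneg (sub_nonneg.2 (mem_Icc ε hε x hx.1).2)]
    exact sub_le_comm.1 hclose

/-- Approximation of a continuous payoff `g` dominated by a concave, nonnegative,
nondecreasing function `h` by a family `(g^ε)_{ε ∈ (0,1)}` of bounded functions, smooth on
`(0,∞)`, whose first and second derivatives have compact support in `(0,∞)`, each dominated by
`h`, and converging pointwise to `g` as `ε ↓ 0`. -/
theorem approximation_of_payoff
    (g h : ℝ → ℝ)
    (hg_cont : ContinuousOn g (Ici 0))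
    (hg_nonneg : ∀ x ∈ Ici (0 : ℝ), 0 ≤ g x)
    (hh_conc : ConcaveOn ℝ (Ici 0) h)
    (hh_nonneg : ∀ x ∈ Ici (0 : ℝ), 0 ≤ h x)
    (hh_mono : MonotoneOn h (Ici 0))
    (hgh : ∀ x ∈ Ici (0 : ℝ), g x ≤ h x) :
    ∃ G : ℝ → ℝ → ℝ,
      (∀ ε ∈ Ioo (0 : ℝ) 1,
        -- (i) `g^ε` is bounded
        (∃ C : ℝ, ∀ x ∈ Ici (0 : ℝ), |G ε x| ≤ C) ∧
        -- `g^ε` maps `[0,∞)` to `[0,∞)` and is continuous there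
        (∀ x ∈ Ici (0 : ℝ), 0 ≤ G ε x) ∧
        ContinuousOn (G ε) (Ici 0) ∧
        -- (ii) `g^ε` is infinitely differentiable on `(0,∞)`
        ContDiffOn ℝ (⊤ : ℕ∞) (G ε) (Ioi 0) ∧
        -- (iii) the first and second derivatives have compact support contained in `(0,∞)`
        (∃ K : Set ℝ, IsCompact K ∧ K ⊆ Ioi 0 ∧
          ∀ x ∈ Ioi (0 : ℝ), x ∉ K →
            deriv (G ε) x = 0 ∧ deriv (deriv (G ε)) x = 0) ∧
        -- (iv) `g^ε ≤ h`
        (∀ x ∈ Ici (0 : ℝ), G ε x ≤ h x)) ∧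
      -- (v) pointwise convergence to `g` as `ε ↓ 0`
      (∀ x ∈ Ici (0 : ℝ),
        Tendsto (fun ε => G ε x) (nhdsWithin 0 (Ioi 0)) (nhds (g x))) := by
  obtain ⟨G, hG, hlim⟩ := approximation_of_payoff_general hg_cont hg_nonneg
  refine ⟨G, fun ε hε ↦ ?_, fun x hx ↦ hlim.tendsto_at hx⟩
  obtain ⟨⟨C, hC⟩, hsmooth, hderiv, hmem⟩ := hG ε hε.1
  exact ⟨⟨C, fun x _ ↦ hC x⟩, fun x hx ↦ (hmem x hx).1, hsmooth.continuous.continuousOn,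
    hsmooth.contDiffOn, hderiv, fun x hx ↦ (hmem x hx).2.trans (hgh x hx)⟩
end
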